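/- For every leader's decision x = (x₁, x₂) in the box [x̲₁, x̄₁] × [x̲₂, x̄₂] and every y ∈ Ω(x), the follower's objective satisfies f(x, y) ≤ y₁ < 1/2; in particular, the optimal value of the lower-level problem is strictly smaller than 1/2. -/

import Mathlib

/-! The first inequality holds because `yₙ ≥ 0` and `x₁ + x₂ - yₙ₊₁ - yₙ₊₂ ≥ 0`.
For the second, `y₁ ≥ 1/2` would make `y₁` positive, hence, by the chain `yᵢ² ≤ yᵢ₊₁`,
also `yₙ > 0`, contradicting `y₁ + yₙ = 1/2`. -/

/-- The lower-level feasible set `Ω(x)` of the bilevel example: points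
`y ∈ ℝ^{n+2}` (0-indexed: Lean index `j` corresponds to math index `j+1`) with
`y₁ + yₙ = 1/2`, `yᵢ² ≤ yᵢ₊₁` for `i = 1,…,n−1`, `yᵢ ≥ 0` for `i = 1,…,n`,
`0 ≤ y_{n+1} ≤ x₁`, and `−x₂ ≤ y_{n+2} ≤ x₂`. -/
def Omega (n : ℕ) (x1 x2 : ℝ) : Set (Fin (n + 2) → ℝ) :=
  {y | y ⟨0, by omega⟩ + y ⟨n - 1, by omega⟩ = 1 / 2 ∧
    (∀ i : ℕ, ∀ _h1 : 1 ≤ i, ∀ _h2 : i ≤ n - 1,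
      (y ⟨i - 1, by omega⟩) ^ 2 ≤ y ⟨i, by omega⟩) ∧
    (∀ i : ℕ, ∀ _h1 : 1 ≤ i, ∀ _h2 : i ≤ n, 0 ≤ y ⟨i - 1, by omega⟩) ∧
    0 ≤ y ⟨n, by omega⟩ ∧ y ⟨n, by omega⟩ ≤ x1 ∧
    -x2 ≤ y ⟨n + 1, by omega⟩ ∧ y ⟨n + 1, by omega⟩ ≤ x2}

/-- The follower's objective `f(x, y) = y₁ − yₙ (x₁ + x₂ − y_{n+1} − y_{n+2})`. -/
noncomputable def follower (n : ℕ) (x1 x2 : ℝ) (y : Fin (n + 2) → ℝ) : ℝ :=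
  y ⟨0, by omega⟩ -
    y ⟨n - 1, by omega⟩ * (x1 + x2 - y ⟨n, by omega⟩ - y ⟨n + 1, by omega⟩)

/-- For every leader's decision `x` in the box and every `y ∈ Ω(x)`, the
follower's objective satisfies `f(x, y) ≤ y₁ < 1/2`; in particular, the
optimal value of the lower-level problem is strictly smaller than `1/2`. -/
theorem stmt3 (n : ℕ) (hn : 2 ≤ n)
    (xl1 xl2 xu1 xu2 : ℝ) (hl1 : 1 ≤ xl1) (hl2 : 1 ≤ xl2)
    (hu1 : xl1 < xu1) (hu2 : xl2 < xu2)
    (x1 x2 : ℝ) (hx1 : x1 ∈ Set.Icc xl1 xu1) (hx2 : x2 ∈ Set.Icc xl2 xu2)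
    (y : Fin (n + 2) → ℝ) (hy : y ∈ Omega n x1 x2) :
    follower n x1 x2 y ≤ y ⟨0, by omega⟩ ∧ y ⟨0, by omega⟩ < 1 / 2 := by
  obtain ⟨hsum, hsq, hnn, _, hy1, _, hy2⟩ := hy
  have hlast : 0 ≤ y ⟨n - 1, by omega⟩ := hnn n (by omega) le_rfl
  refine ⟨?_, ?_⟩
  · have h := mul_nonneg hlast
      (show 0 ≤ x1 + x2 - y ⟨n, by omega⟩ - y ⟨n + 1, by omega⟩ by linarith)
    unfold follower
    linarith
  · by_contra! hge
    -- Positivity of `y₁` propagates along the chain `yᵢ² ≤ yᵢ₊₁`.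
    have hpos : ∀ i : ℕ, ∀ hi : i ≤ n - 1, 0 < y ⟨i, by omega⟩ := by
      intro i
      induction i with
      | zero => intro _; linarith
      | succ k ih =>
        intro hi
        exact lt_of_lt_of_le (pow_pos (ih (by omega)) 2) (hsq (k + 1) (by omega) hi)
    linarith [hpos (n - 1) le_rfl]
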